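/- For every real number x with 0 ≤ x < 1, the limit inferior as n → ∞ of (p_{n+1}^x - p_n^x) equals 0, where p_n denotes the n-th prime number. -/

import Mathlib

/-- `nthPrime n` is the `n`-th prime number with 1-based indexing:
`nthPrime 1 = 2`, `nthPrime 2 = 3`, `nthPrime 3 = 5`, ... -/
noncomputable def nthPrime (n : ℕ) : ℕ := Nat.nth Nat.Prime (n - 1)

/-!
If the gaps `p (n + 1) ^ x - p n ^ x` were eventually at least some `ε > 0`, then `p n ^ x` would
grow at least linearly, so `1 / p n = O(n ^ (-1 / x))` would be summable because `1 / x > 1`. This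
contradicts Euler's theorem that the sum of the reciprocals of the primes diverges.
-/

open Filter Asymptotics

theorem liminf_eq_of_eventually_le_of_frequently_lt {ι α : Type*}
    [ConditionallyCompleteLinearOrder α] [DenselyOrdered α] [NoMaxOrder α]
    {l : Filter ι} {u : ι → α} {c : α} (hc : ∀ᶠ i in l, c ≤ u i)
    (hfreq : ∀ b > c, ∃ᶠ i in l, u i < b) : liminf u l = c := by
  have hle : ∀ b > c, ∃ᶠ i in l, u i ≤ b := fun b hb ↦ (hfreq b hb).mono fun _ ↦ le_of_lt
  obtain ⟨d, hd⟩ := exists_gt c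
  apply le_antisymm
  · exact le_of_forall_gt_imp_ge_of_dense fun b hb ↦
      liminf_le_of_frequently_le (hle b hb) (isBoundedUnder_of_eventually_ge hc)
  · exact le_liminf_of_le (IsCoboundedUnder.of_frequently_le (hle d hd)) hc

theorem natCast_isBigO_of_eventually_le_sub {b : ℕ → ℝ} {ε : ℝ} (hε : 0 < ε)
    (hb : ∀ᶠ n in atTop, ε ≤ b (n + 1) - b n) : (fun n : ℕ ↦ (n : ℝ)) =O[atTop] b := by
  obtain ⟨N, hN⟩ := eventually_atTop.mp hb
  have linear_le : ∀ n ≥ N, b N + ε * (n - N) ≤ b n := by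
    intro n hn
    induction n, hn using Nat.le_induction with
    | base => simp
    | succ n hn ih =>
      push_cast
      linarith [hN n hn]
  have eventually_half : ∀ᶠ n : ℕ in atTop, ε * N - b N ≤ ε / 2 * n :=
    (tendsto_natCast_atTop_atTop.const_mul_atTop (half_pos hε)).eventually_ge_atTop _
  refine IsBigO.of_bound (2 / ε) ?_
  filter_upwards [eventually_half, eventually_ge_atTop N] with n hhalf hn
  have half_le : ε / 2 * n ≤ b n := by linarith [linear_le n hn]
  calc ‖(n : ℝ)‖ = 2 / ε * (ε / 2 * n) := by
        rw [Real.norm_natCast]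
        field_simp
    _ ≤ 2 / ε * ‖b n‖ := by
        gcongr
        exact half_le.trans (Real.le_norm_self _)

theorem summable_inv_of_natCast_isBigO_rpow {a : ℕ → ℝ} (ha : ∀ n, 0 ≤ a n) {x : ℝ}
    (hx0 : 0 < x) (hx1 : x < 1) (h : (fun n : ℕ ↦ (n : ℝ)) =O[atTop] fun n ↦ a n ^ x) :
    Summable fun n ↦ (a n)⁻¹ := by
  have inv_isBigO : (fun n ↦ (a n ^ x)⁻¹) =O[atTop] fun n : ℕ ↦ (n : ℝ)⁻¹ := by
    refine h.inv_rev ?_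
    filter_upwards [eventually_ne_atTop 0] with n hn hzero
    exact absurd hzero (Nat.cast_ne_zero.mpr hn)
  have rpow_isBigO : (fun n ↦ (a n)⁻¹) =O[atTop] fun n : ℕ ↦ ((n : ℝ) ^ x⁻¹)⁻¹ := by
    refine (inv_isBigO.rpow (inv_nonneg.mpr hx0.le)
      (Eventually.of_forall fun n ↦ by positivity)).congr (fun n ↦ ?_) fun n ↦ ?_
    · rw [Real.inv_rpow (Real.rpow_nonneg (ha n) x), Real.rpow_rpow_inv (ha n) hx0.ne']
    · exact Real.inv_rpow n.cast_nonneg _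
  exact summable_of_isBigO_nat (Real.summable_nat_rpow_inv.mpr ((one_lt_inv₀ hx0).mpr hx1))
    rpow_isBigO

theorem frequently_rpow_sub_rpow_lt {a : ℕ → ℝ} (ha : ∀ n, 0 ≤ a n)
    (hsum : ¬ Summable fun n ↦ (a n)⁻¹) {x : ℝ} (hx0 : 0 ≤ x) (hx1 : x < 1) {ε : ℝ}
    (hε : 0 < ε) : ∃ᶠ n in atTop, a (n + 1) ^ x - a n ^ x < ε := by
  rcases hx0.eq_or_lt with rfl | hx_pos
  · simpa using hε
  · intro hgap
    simp only [not_lt] at hgap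
    exact hsum (summable_inv_of_natCast_isBigO_rpow ha hx_pos hx1
      (natCast_isBigO_of_eventually_le_sub hε hgap))

theorem liminf_rpow_sub_rpow_eq_zero {a : ℕ → ℝ} (ha : ∀ n, 0 ≤ a n) (ha_mono : Monotone a)
    (hsum : ¬ Summable fun n ↦ (a n)⁻¹) {x : ℝ} (hx0 : 0 ≤ x) (hx1 : x < 1) :
    liminf (fun n ↦ a (n + 1) ^ x - a n ^ x) atTop = 0 :=
  liminf_eq_of_eventually_le_of_frequently_lt
    (Eventually.of_forall fun n ↦
      sub_nonneg.mpr (Real.rpow_le_rpow (ha n) (ha_mono n.le_succ) hx0))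
    fun _ ↦ frequently_rpow_sub_rpow_lt ha hsum hx0 hx1

theorem summable_comp_nth_iff_summable_indicator {α : Type*} [AddCommMonoid α]
    [TopologicalSpace α] {p : ℕ → Prop} (hp : {m | p m}.Infinite) (f : ℕ → α) :
    (Summable fun n ↦ f (Nat.nth p n)) ↔ Summable ({m | p m}.indicator f) := by
  have indicator_eq_zero : ∀ m ∉ Set.range (Nat.nth p), {m | p m}.indicator f m = 0 := by
    rw [Nat.range_nth_of_infinite hp]
    exact fun m hm ↦ Set.indicator_of_notMem hm f
  have indicator_comp_nth : {m | p m}.indicator f ∘ Nat.nth p = fun n ↦ f (Nat.nth p n) :=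
    funext fun n ↦ Set.indicator_of_mem (Nat.nth_mem_of_infinite hp n) f
  rw [← (Nat.nth_injective hp).summable_iff indicator_eq_zero, indicator_comp_nth]

theorem nthPrime_monotone : Monotone nthPrime := fun _ _ hmn ↦
  Nat.nth_monotone Nat.infinite_setOfPred_prime (Nat.sub_le_sub_right hmn 1)

theorem not_summable_inv_nthPrime : ¬ Summable fun n ↦ (nthPrime n : ℝ)⁻¹ := by
  rw [← summable_nat_add_iff 1]
  simp only [nthPrime, Nat.add_sub_cancel]
  rw [summable_comp_nth_iff_summable_indicator Nat.infinite_setOfPred_prime fun m ↦ (m : ℝ)⁻¹]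
  simpa only [one_div] using not_summable_one_div_on_primes

/-- For every real `x` with `0 ≤ x < 1`, `liminf (p (n+1) ^ x - p n ^ x) = 0`. -/
theorem liminf_prime_power_gap (x : ℝ) (hx0 : 0 ≤ x) (hx1 : x < 1) :
    Filter.liminf
      (fun n => (nthPrime (n + 1) : ℝ) ^ x - (nthPrime n : ℝ) ^ x)
      Filter.atTop = 0 :=
  liminf_rpow_sub_rpow_eq_zero (fun n ↦ (nthPrime n).cast_nonneg)
    (Nat.mono_cast.comp nthPrime_monotone) not_summable_inv_nthPrime hx0 hx1
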